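/- arXiv:2404.18690 — 3 statements merged into one kernel-verified Lean document; each statement's English description precedes it below -/
import Mathlib

section
/- Suppose the pair (𝒫,𝒟) satisfies conditions (T1)–(T3) and that only finitely many n satisfy Φ(n) ≥ 3. Then the Moran measure μ_{𝒫,𝒟} is a spectral measure. -/
open MeasureTheory Filter Finset Real
open scoped ENNReal NNReal

noncomputable section

/-- `P n = p 1 * p 2 * ⋯ * p n`. -/
def Pprod (p : ℕ → ℕ) (n : ℕ) : ℕ := ∏ i ∈ Finset.Icc 1 n, p i

/-- The uniform probability measure on the finite set `s • E ⊆ ℝ`. -/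
def unifD (E : Finset ℕ) (s : ℝ) : Measure ℝ :=
  (E.card : ℝ≥0∞)⁻¹ • ∑ d ∈ E, Measure.dirac (s * (d : ℝ))

/-- The finite convolutions `μ_n = δ_{P₁⁻¹D₁} ∗ ⋯ ∗ δ_{Pₙ⁻¹Dₙ}`. -/
def muN (p : ℕ → ℕ) (D : ℕ → Finset ℕ) : ℕ → Measure ℝ
  | 0 => Measure.dirac 0
  | n + 1 => Measure.conv (muN p D n) (unifD (D (n + 1)) ((Pprod p (n + 1) : ℝ)⁻¹))

/-- `μ` is the weak limit of the sequence of measures `ν n`. -/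
def IsWeakLimit (ν : ℕ → Measure ℝ) (μ : Measure ℝ) : Prop :=
  ∀ f : BoundedContinuousFunction ℝ ℝ,
    Tendsto (fun n => ∫ x, f x ∂ν n) atTop (nhds (∫ x, f x ∂μ))

/-- `μ` is the Moran measure attached to `(p, D)`: the infinite convolution
`δ_{P₁⁻¹D₁} ∗ δ_{P₂⁻¹D₂} ∗ ⋯`, in the sense of weak convergence. -/
def IsMoran (p : ℕ → ℕ) (D : ℕ → Finset ℕ) (μ : Measure ℝ) : Prop :=
  IsProbabilityMeasure μ ∧ IsWeakLimit (muN p D) μ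

/-- The exponentials `e_λ, λ ∈ Λ` are pairwise orthogonal in `L²(μ)`. -/
def IsOrthSet (μ : Measure ℝ) (Λ : Set ℝ) : Prop :=
  ∀ l ∈ Λ, ∀ l' ∈ Λ, l ≠ l' →
    ∫ x : ℝ, Complex.exp (2 * Real.pi * Complex.I * (l - l') * x) ∂μ = 0

/-- `Λ` is a spectrum of `μ`: the exponentials `e_λ, λ ∈ Λ` form an orthonormal
basis of `L²(μ)` (orthonormal + maximal, i.e. complete). -/
def IsSpectrum (μ : Measure ℝ) (Λ : Set ℝ) : Prop :=
  IsOrthSet μ Λ ∧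
  ∀ f : ℝ → ℂ, MemLp f 2 μ →
    (∀ l ∈ Λ, ∫ x : ℝ, f x * Complex.exp (-(2 * Real.pi * Complex.I * l * x)) ∂μ = 0) →
    f =ᵐ[μ] 0

def IsSpectralMeasure (μ : Measure ℝ) : Prop := ∃ Λ : Set ℝ, Λ.Countable ∧ IsSpectrum μ Λ

/-- Condition (T1): `D n = {0,1,…,N-1}` with `3 < N`, `N ∣ p n`, `N < p n`. -/
def T1cond (p : ℕ → ℕ) (D : ℕ → Finset ℕ) (n : ℕ) : Prop :=
  ∃ N : ℕ, 3 < N ∧ N ∣ p n ∧ N < p n ∧ D n = Finset.range N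

/-- Condition (T2) (except for the global sup condition): `D n = {0,a,b}`,
`0 < a < b`, `gcd(a,b) = 1`, `{a,b} ≡ {1,2} (mod 3)`, `3 ∣ p n`. -/
def T2cond (p : ℕ → ℕ) (D : ℕ → Finset ℕ) (n : ℕ) : Prop :=
  ∃ a b : ℕ, 0 < a ∧ a < b ∧ Nat.gcd a b = 1 ∧
    (a % 3 = 1 ∧ b % 3 = 2 ∨ a % 3 = 2 ∧ b % 3 = 1) ∧ 3 ∣ p n ∧
    D n = ({0, a, b} : Finset ℕ)

/-- Condition (T3): `D n = {0,d}` with `0 < d < p n` and `p n / gcd (d, p n)` even.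
(The decomposition `d = 2^l d'` with `d'` odd always exists, with `l` the 2-adic
valuation of `d`.) -/
def T3cond (p : ℕ → ℕ) (D : ℕ → Finset ℕ) (n : ℕ) : Prop :=
  ∃ d : ℕ, 0 < d ∧ d < p n ∧ 2 ∣ p n / Nat.gcd d (p n) ∧ D n = ({0, d} : Finset ℕ)

/-- The pair `(p, D)` satisfies conditions (T1)–(T3), including the requirement
`sup {b n / p n : n of type (T2)} < 2/3`. -/
def SatisfiesT (p : ℕ → ℕ) (D : ℕ → Finset ℕ) : Prop :=
  (∀ n, 1 ≤ n → T1cond p D n ∨ T2cond p D n ∨ T3cond p D n) ∧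
  ∃ c : ℝ, c < 2 / 3 ∧ ∀ n, 1 ≤ n → T2cond p D n → (((D n).sup id : ℕ) : ℝ) / (p n : ℝ) ≤ c

/-- `σ ∈ {-1,1}^ℕ`. -/
def IsSigma (σ : ℕ → ℤ) : Prop := ∀ n, σ n = 1 ∨ σ n = -1

/-- `α` is admissible: `α m ∈ {-⌊N/2⌋, …, N - 1 - ⌊N/2⌋}` where `N = #(D m)`,
for every `m` with `#(D m) = N_m > 3`. -/
def Admissible (D : ℕ → Finset ℕ) (α : ℕ → ℤ) : Prop :=
  ∀ m, 1 ≤ m → 3 < (D m).card →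
    -(((D m).card / 2 : ℕ) : ℤ) ≤ α m ∧
      α m ≤ ((D m).card : ℤ) - 1 - (((D m).card / 2 : ℕ) : ℤ)

/-- The largest element `d n` (resp. `b n`) of `D n`. -/
def bOf (D : ℕ → Finset ℕ) (n : ℕ) : ℕ := (D n).sup id

/-- The middle element `a n` of a digit set `{0, a, b}`. -/
def aOf (D : ℕ → Finset ℕ) (n : ℕ) : ℕ := (((D n).erase 0).erase ((D n).sup id)).sup id

/-- `l n`: the 2-adic valuation of `d n`, i.e. `d n = 2^(l n) * d'` with `d'` odd. -/
def lOf (D : ℕ → Finset ℕ) (n : ℕ) : ℕ := padicValNat 2 ((D n).sup id)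

/-- The finite set `Λ_n^{σ,α}`. -/
def LamN (p : ℕ → ℕ) (D : ℕ → Finset ℕ) (σ α : ℕ → ℤ) (n : ℕ) : Set ℝ :=
  { x | ∃ c : ℕ → ℝ,
      (∀ i, (D i).card = 2 → c i = 0 ∨ c i = (σ i : ℝ) / 2 ^ (1 + lOf D i)) ∧
      (∀ i, (D i).card = 3 → c i = 0 ∨ c i = 1 / 3 ∨ c i = -(1 / 3)) ∧
      (∀ i, 3 < (D i).card → c i = (α i : ℝ) / ((D i).card : ℝ)) ∧
      x = ∑ i ∈ Finset.Icc 1 n, (Pprod p i : ℝ) * c i }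

/-- `Λ^{σ,α} = ⋃_{n ≥ 1} Λ_n^{σ,α}`. -/
def Lam (p : ℕ → ℕ) (D : ℕ → Finset ℕ) (σ α : ℕ → ℤ) : Set ℝ :=
  ⋃ n ∈ Set.Ici 1, LamN p D σ α n

/-- The Fourier transform `μ̂(ξ) = ∫ e^{-2πixξ} dμ(x)`. -/
def FT (μ : Measure ℝ) (ξ : ℝ) : ℂ :=
  ∫ x : ℝ, Complex.exp (-(2 * Real.pi * Complex.I * x * ξ)) ∂μ

/-- The mask polynomial `m_E(t) = (1/#E) ∑_{d ∈ E} e^{2πidt}`. -/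
def mask (E : Finset ℕ) (t : ℝ) : ℂ :=
  (E.card : ℂ)⁻¹ * ∑ d ∈ E, Complex.exp (2 * Real.pi * Complex.I * (d : ℝ) * t)

end

/-!
A family of frequencies is a spectrum of `μ` once Parseval's identity holds for every exponential
(Jorgensen–Pedersen). Hadamard triples give the identity for all the finite convolutions. The
Fourier transform of the `n`-th convolution is `Pₙ`-periodic, so its spectrum can be moved by
multiples of `Pₙ`. When all later digit sets are pairs, such shifts keep the transform of the
remaining factors bounded away from `0`, uniformly along an increasing sequence of spectra.
Dominated convergence then carries Parseval's identity over to the infinite convolution.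
-/

noncomputable section

open scoped FourierTransform SchwartzMap

section FourierUniqueness

variable {V F : Type*} [NormedAddCommGroup V] [InnerProductSpace ℝ V] [FiniteDimensional ℝ V]
  [MeasurableSpace V] [BorelSpace V] [NormedAddCommGroup F] [NormedSpace ℂ F] [CompleteSpace F]

-- Every test function is the Fourier transform of a Schwartz function, so by Fubini its integral
-- against `f` only involves the Fourier transform of `f`.
theorem ae_eq_zero_of_integral_fourierChar_smul_eq_zero {μ : Measure V} [IsFiniteMeasure μ]
    {f : V → F} (hf : Integrable f μ) (h : ∀ ξ, ∫ x, 𝐞 (-inner ℝ ξ x) • f x ∂μ = 0) :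
    f =ᵐ[μ] 0 := by
  refine ae_eq_zero_of_integral_contDiff_smul_eq_zero hf.locallyIntegrable fun φ hφ hφ_supp => ?_
  have hcoe_supp : HasCompactSupport fun x => (φ x : ℂ) :=
    hφ_supp.comp_left (g := ((↑) : ℝ → ℂ)) Complex.ofReal_zero
  let g : 𝓢(V, ℂ) := hcoe_supp.toSchwartzMap (Complex.ofRealCLM.contDiff.comp hφ)
  let ψ : 𝓢(V, ℂ) := 𝓕⁻ g
  have hφ_eq (x : V) : (φ x : ℂ) = 𝓕 (ψ : V → ℂ) x := by
    rw [← SchwartzMap.fourier_coe, FourierTransform.fourier_fourierInv_eq]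
    rfl
  calc ∫ x, φ x • f x ∂μ
      = ∫ x, 𝓕 (ψ : V → ℂ) x • f x ∂μ := by simp only [← hφ_eq, Complex.coe_smul]
    _ = ∫ ξ, ψ ξ • ∫ x, 𝐞 (-inner ℝ ξ x) • f x ∂μ :=
        VectorFourier.integral_fourierIntegral_smul_eq_flip (μ := volume) (L := innerₗ V)
          Real.continuous_fourierChar continuous_inner ψ.integrable hf
    _ = 0 := by simp only [h, smul_zero, integral_zero]

end FourierUniqueness

theorem inner_eq_zero_of_norm_sq_le_tsum {𝕜 E ι : Type*} [RCLike 𝕜] [NormedAddCommGroup E]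
    [InnerProductSpace 𝕜 E] {v : ι → E} (hv : Orthonormal 𝕜 v) {x f : E}
    (hx : ‖x‖ ^ 2 ≤ ∑' i, ‖inner 𝕜 (v i) x‖ ^ 2) (hf : ∀ i, inner 𝕜 (v i) f = 0) :
    inner 𝕜 f x = 0 := by
  set K := Submodule.span 𝕜 {f}
  have hv_mem (i : ι) : v i ∈ Kᗮ := Submodule.mem_orthogonal_singleton_iff_inner_left.2 (hf i)
  have hinner (i : ι) : inner 𝕜 (v i) (Kᗮ.starProjection x) = inner 𝕜 (v i) x := by
    rw [← Submodule.inner_starProjection_left_eq_right,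
      Submodule.starProjection_eq_self_iff.2 (hv_mem i)]
  have hbessel : ‖x‖ ^ 2 ≤ ‖Kᗮ.starProjection x‖ ^ 2 := by
    refine hx.trans ?_
    simpa only [hinner] using hv.tsum_inner_products_le (x := Kᗮ.starProjection x)
  have hpyth := Submodule.norm_sq_eq_add_norm_sq_starProjection x K
  have hproj : K.starProjection x = 0 :=
    norm_eq_zero.1 <| pow_eq_zero_iff two_ne_zero |>.1 <| by
      nlinarith [sq_nonneg ‖K.starProjection x‖]
  exact Submodule.mem_orthogonal_singleton_iff_inner_right.1
    ((Submodule.starProjection_apply_eq_zero_iff K).1 hproj)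

section Parseval

variable {ι : Type*}

/-- The Parseval identity `∑ᵢ |g (ξ + eᵢ)|² = 1` for a function `g` and frequencies `eᵢ`. If `g` is
the Fourier transform of a probability measure, it characterises the `eᵢ` that form a spectrum of
that measure, see `isSpectrum_range`. -/
def IsParseval (g : ℝ → ℂ) (e : ι → ℝ) : Prop :=
  ∀ ξ, HasSum (fun i => ‖g (ξ + e i)‖ ^ 2) 1

namespace IsParseval

-- At `ξ = -eᵢ` the `i`-th term of the identity is already `1`.
lemma apply_sub_eq_zero {g : ℝ → ℂ} {e : ι → ℝ} (h : IsParseval g e) (hg : g 0 = 1) {i j : ι}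
    (hij : i ≠ j) : g (e j - e i) = 0 := by
  classical
  have hle := sum_le_hasSum {i, j} (fun _ _ => by positivity) (h (-e i))
  rw [Finset.sum_pair hij, neg_add_cancel, hg, norm_one, one_pow, add_le_iff_nonpos_right] at hle
  rw [sub_eq_neg_add, ← norm_eq_zero]
  exact pow_eq_zero_iff two_ne_zero |>.1 (hle.antisymm (by positivity))

lemma injective {g : ℝ → ℂ} {e : ι → ℝ} (h : IsParseval g e) (hg : g 0 = 1) :
    Function.Injective e := fun i j hij => by
  by_contra hne
  have := h.apply_sub_eq_zero hg hne
  simp [hij, hg] at this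

lemma range {α : Type*} {g : ℝ → ℂ} {c : α → ℝ} {k : ι → α} (h : IsParseval g (c ∘ k))
    (hg : g 0 = 1) : IsParseval g fun l : Set.range k => c l := fun ξ =>
  (h.injective hg).of_comp.hasSum_range_iff (f := fun l => ‖g (ξ + c l)‖ ^ 2) |>.2 (h ξ)

-- The sum over `j` is Parseval's identity for `g'`, whatever the point `c * (ξ + e i)`.
lemma prod {κ : Type*} {g g' f : ℝ → ℂ} {e : ι → ℝ} {e' : κ → ℝ} {w : ι × κ → ℝ} (c : ℝ)
    (hg : IsParseval g e) (hg' : IsParseval g' e')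
    (hf : ∀ ξ a, ‖f (ξ + w a)‖ = ‖g (ξ + e a.1)‖ * ‖g' (c * (ξ + e a.1) + e' a.2)‖) :
    IsParseval f w := fun ξ => by
  simp only [hf, mul_pow]
  have hfiber (i : ι) : HasSum
      (fun j => ‖g (ξ + e i)‖ ^ 2 * ‖g' (c * (ξ + e i) + e' j)‖ ^ 2) (‖g (ξ + e i)‖ ^ 2) := by
    simpa only [mul_one] using (hg' (c * (ξ + e i))).mul_left (‖g (ξ + e i)‖ ^ 2)
  have hsummable : Summable fun a : ι × κ =>
      ‖g (ξ + e a.1)‖ ^ 2 * ‖g' (c * (ξ + e a.1) + e' a.2)‖ ^ 2 := by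
    refine (summable_prod_of_nonneg fun a => by positivity).2
      ⟨fun i => (hfiber i).summable, ?_⟩
    simpa only [(hfiber _).tsum_eq] using (hg ξ).summable
  exact (hsummable.hasSum.prod_fiberwise hfiber).unique (hg ξ) ▸ hsummable.hasSum

-- Dominated convergence for the sum over `⋃ n, S n`, with bound `C ^ 2 * ‖g (ξ + e l)‖ ^ 2`.
lemma iUnion_of_tendsto {α : Type*} {G : ℕ → ℝ → ℂ} {g : ℝ → ℂ} {S : ℕ → Set α} {e : α → ℝ}
    (hS : Monotone S) (hG : ∀ n, IsParseval (G n) fun l : S n => e l)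
    (hlim : ∀ ξ, Tendsto (G · ξ) atTop (nhds (g ξ)))
    {C : ℝ} (hC : ∀ ξ, ∀ᶠ n in atTop, ∀ l ∈ S n, ‖G n (ξ + e l)‖ ≤ C * ‖g (ξ + e l)‖) :
    IsParseval g fun l : ⋃ n, S n => e l := fun ξ => by
  set U := ⋃ n, S n
  let F : ℕ → α → ℝ := fun n => (S n).indicator fun l => ‖G n (ξ + e l)‖ ^ 2
  let F' : α → ℝ := U.indicator fun l => ‖g (ξ + e l)‖ ^ 2
  have hF_nonneg (n : ℕ) (l : α) : 0 ≤ F n l := Set.indicator_nonneg (fun _ _ => by positivity) l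
  have hF'_nonneg (l : α) : 0 ≤ F' l := Set.indicator_nonneg (fun _ _ => by positivity) l
  have hF_sum (n : ℕ) : HasSum (F n) 1 := hasSum_subtype_iff_indicator.1 (hG n ξ)
  have hF_lim (l : α) : Tendsto (F · l) atTop (nhds (F' l)) := by
    by_cases hl : l ∈ U
    · obtain ⟨n₀, hn₀⟩ := Set.mem_iUnion.1 hl
      simp only [F', Set.indicator_of_mem hl]
      refine ((hlim _).norm.pow 2).congr' ?_
      filter_upwards [eventually_ge_atTop n₀] with n hn
      simp only [F, Set.indicator_of_mem (hS hn hn₀)]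
    · have hl' (n : ℕ) : l ∉ S n := fun h => hl (Set.mem_iUnion_of_mem n h)
      simp only [F, F', Set.indicator_of_notMem hl, Set.indicator_of_notMem (hl' _),
        tendsto_const_nhds]
  have hF'_summable : Summable F' := summable_of_sum_le hF'_nonneg fun T =>
    le_of_tendsto' (tendsto_finsetSum T fun l _ => hF_lim l) fun n =>
      sum_le_hasSum T (fun l _ => hF_nonneg n l) (hF_sum n)
  have hdom : ∀ᶠ n in atTop, ∀ l, ‖F n l‖ ≤ C ^ 2 * F' l := by
    filter_upwards [hC ξ] with n hn l
    rw [Real.norm_of_nonneg (hF_nonneg n l)]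
    by_cases hl : l ∈ S n
    · have hlU : l ∈ U := Set.mem_iUnion_of_mem n hl
      simp only [F, F', Set.indicator_of_mem hl, Set.indicator_of_mem hlU, ← mul_pow]
      exact pow_le_pow_left₀ (norm_nonneg _) (hn l hl) 2
    · simpa only [F, Set.indicator_of_notMem hl] using mul_nonneg (sq_nonneg C) (hF'_nonneg l)
  have htsum := tendsto_tsum_of_dominated_convergence (hF'_summable.mul_left (C ^ 2)) hF_lim hdom
  simp only [(hF_sum _).tsum_eq] at htsum
  have hF'_sum : HasSum F' 1 :=
    tendsto_nhds_unique htsum tendsto_const_nhds ▸ hF'_summable.hasSum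
  exact hasSum_subtype_iff_indicator.2 hF'_sum

end IsParseval

end Parseval

section Spectrum

variable (μ : Measure ℝ) [IsProbabilityMeasure μ]

lemma memLp_fourierChar (t : ℝ) : MemLp (fun x => (𝐞 (t * x) : ℂ)) 2 μ :=
  MemLp.of_bound (by fun_prop) 1 (Eventually.of_forall fun _ => (Circle.norm_coe _).le)

/-- The exponential `x ↦ e^{2πitx}` as an element of `L²(μ)`. -/
def expLp (t : ℝ) : Lp ℂ 2 μ := (memLp_fourierChar μ t).toLp

lemma inner_expLp_toLp (t : ℝ) {f : ℝ → ℂ} (hf : MemLp f 2 μ) :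
    inner ℂ (expLp μ t) hf.toLp = ∫ x, f x * 𝐞 (-(t * x)) ∂μ := by
  rw [L2.inner_def]
  refine integral_congr_ae ?_
  filter_upwards [(memLp_fourierChar μ t).coeFn_toLp, hf.coeFn_toLp] with x hexp hfx
  rw [expLp, hexp, hfx, RCLike.inner_apply, AddChar.map_neg_eq_inv, Circle.coe_inv_eq_conj]

lemma charFun_eq_integral_fourierChar (μ : Measure ℝ) (t : ℝ) :
    charFun μ (2 * π * t) = ∫ x, (𝐞 (t * x) : ℂ) ∂μ := by
  simp only [charFun_apply_real, Real.fourierChar_apply]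
  push_cast
  simp only [mul_assoc]

lemma inner_expLp_expLp (s t : ℝ) :
    inner ℂ (expLp μ s) (expLp μ t) = charFun μ (2 * π * (t - s)) := by
  refine (inner_expLp_toLp μ s (memLp_fourierChar μ t)).trans ?_
  rw [charFun_eq_integral_fourierChar]
  simp only [sub_mul, sub_eq_add_neg (t * _), AddChar.map_add_eq_mul, Circle.coe_mul]

lemma norm_expLp (t : ℝ) : ‖expLp μ t‖ = 1 := by
  rw [← pow_eq_one_iff_of_nonneg (norm_nonneg _) two_ne_zero,
    ← inner_self_eq_norm_sq (𝕜 := ℂ), inner_expLp_expLp]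
  simp

variable {μ}

theorem isSpectrum_range {ι : Type*} {e : ι → ℝ}
    (h : IsParseval (fun ξ => charFun μ (2 * π * ξ)) e) : IsSpectrum μ (Set.range e) := by
  have horth {i j : ι} (hij : i ≠ j) : charFun μ (2 * π * (e j - e i)) = 0 :=
    h.apply_sub_eq_zero (by simp) hij
  refine ⟨?_, fun f hf hzero => ?_⟩
  · rintro _ ⟨i, rfl⟩ _ ⟨j, rfl⟩ hij
    rw [← horth (i := j) (j := i) (fun hji => hij (hji ▸ rfl)), charFun_apply_real]
    congr! 3 with x
    push_cast
    ring
  have hv : Orthonormal ℂ fun i => expLp μ (e i) :=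
    ⟨fun i => norm_expLp μ _, fun i j hij => (inner_expLp_expLp μ _ _).trans (horth hij)⟩
  have hvf (i : ι) : inner ℂ (expLp μ (e i)) hf.toLp = 0 := by
    rw [inner_expLp_toLp, ← hzero _ ⟨i, rfl⟩]
    congr! 3 with x
    rw [Real.fourierChar_apply]
    congr 1
    push_cast
    ring
  have hparseval (ξ : ℝ) : ‖expLp μ ξ‖ ^ 2 ≤ ∑' i, ‖inner ℂ (expLp μ (e i)) (expLp μ ξ)‖ ^ 2 := by
    rw [norm_expLp, one_pow, ← (h (-ξ)).tsum_eq]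
    refine (tsum_congr fun i => ?_).le
    rw [inner_expLp_expLp, ← neg_sub, mul_neg, charFun_neg, RCLike.norm_conj, sub_eq_neg_add]
  refine ae_eq_zero_of_integral_fourierChar_smul_eq_zero (hf.integrable one_le_two) fun ξ => ?_
  rw [← inner_eq_zero_symm.1 (inner_eq_zero_of_norm_sq_le_tsum hv (hparseval ξ) hvf),
    inner_expLp_toLp]
  simp only [Circle.smul_def, smul_eq_mul, mul_comm, RCLike.inner_apply, conj_trivial]

end Spectrum

section FourierChar

lemma fourierChar_eq_one_iff {x : ℝ} : 𝐞 x = 1 ↔ ∃ k : ℤ, x = k := by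
  rw [Real.fourierChar_apply', Circle.exp_eq_one]
  refine exists_congr fun k => ?_
  rw [mul_comm, mul_left_inj' two_pi_pos.ne']

lemma sum_range_fourierChar_eq_zero {N : ℕ} {a : ℤ} (h : ¬(N : ℤ) ∣ a) :
    ∑ j ∈ range N, (𝐞 (a * j / N) : ℂ) = 0 := by
  rcases N.eq_zero_or_pos with rfl | hN
  · simp
  have hN' : (N : ℝ) ≠ 0 := by positivity
  set z := 𝐞 (a / N) with hz
  have hz_pow (j : ℕ) : 𝐞 (a * j / N) = z ^ j := by
    rw [hz, ← AddChar.map_nsmul_eq_pow, nsmul_eq_mul]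
    congr 1
    ring
  have hz_ne : (z : ℂ) ≠ 1 := by
    rw [Ne, ← Circle.coe_one, Circle.coe_inj, fourierChar_eq_one_iff]
    rintro ⟨k, hk⟩
    rw [div_eq_iff hN'] at hk
    exact h ⟨k, by rw [mul_comm]; exact_mod_cast hk⟩
  have hz_N : z ^ N = 1 := by
    rw [← hz_pow, mul_div_cancel_right₀ _ hN', fourierChar_eq_one_iff]
    exact ⟨a, rfl⟩
  simp only [hz_pow, Circle.coe_pow]
  rw [geom_sum_eq hz_ne, ← Circle.coe_pow, hz_N, Circle.coe_one, sub_self, zero_div]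

end FourierChar

section Mask

variable {E : Finset ℕ}

lemma mask_eq_sum_fourierChar (E : Finset ℕ) (t : ℝ) :
    mask E t = (E.card : ℂ)⁻¹ * ∑ d ∈ E, (𝐞 (d * t) : ℂ) := by
  simp only [mask, Real.fourierChar_apply]
  congr! 3
  push_cast
  ring

lemma norm_mask_le_one (E : Finset ℕ) (t : ℝ) : ‖mask E t‖ ≤ 1 := by
  rw [mask_eq_sum_fourierChar, norm_mul, norm_inv, Complex.norm_natCast]
  refine inv_mul_le_one_of_le₀ ((norm_sum_le _ _).trans_eq ?_) (Nat.cast_nonneg _)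
  simp only [Circle.norm_coe, sum_const, nsmul_eq_mul, mul_one]

lemma mask_zero (hE : E.Nonempty) : mask E 0 = 1 := by
  have : (E.card : ℂ) ≠ 0 := by exact_mod_cast hE.card_ne_zero
  simp [mask, this]

lemma mask_add_intCast (E : Finset ℕ) (t : ℝ) (k : ℤ) : mask E (t + k) = mask E t := by
  have hperiod (d : ℕ) : 𝐞 (d * k) = 1 := fourierChar_eq_one_iff.2 ⟨d * k, by push_cast; rfl⟩
  simp only [mask_eq_sum_fourierChar, mul_add, AddChar.map_add_eq_mul, hperiod, mul_one]

lemma norm_mask_pair {d : ℕ} (hd : 0 < d) (t : ℝ) : ‖mask {0, d} t‖ = |cos (π * d * t)| := by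
  have hfactor : mask {0, d} t = 𝐞 (d * t / 2) * (cos (π * d * t) : ℂ) := by
    set w := (𝐞 (d * t / 2) : ℂ) with hw
    have hw_ne : w ≠ 0 := Circle.coe_ne_zero _
    have hw_exp : w = Complex.exp (π * d * t * Complex.I) := by
      rw [hw, Real.fourierChar_apply]
      push_cast
      ring_nf
    have hw_sq : (𝐞 (d * t) : ℂ) = w ^ 2 := by
      rw [hw, ← Circle.coe_pow, ← AddChar.map_nsmul_eq_pow, nsmul_eq_mul]
      ring_nf
    rw [mask_eq_sum_fourierChar, card_pair hd.ne, sum_pair hd.ne, hw_sq, Complex.ofReal_cos,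
      Complex.cos]
    push_cast
    rw [neg_mul, Complex.exp_neg, ← hw_exp, zero_mul, AddChar.map_zero_eq_one, Circle.coe_one]
    field_simp
    ring
  rw [hfactor, norm_mul, Circle.norm_coe, one_mul, Complex.norm_real, Real.norm_eq_abs]

lemma norm_mask_sq (E : Finset ℕ) (t : ℝ) :
    ((‖mask E t‖ ^ 2 : ℝ) : ℂ) =
      (E.card : ℂ)⁻¹ ^ 2 * ∑ d ∈ E, ∑ d' ∈ E, (𝐞 ((d - d') * t) : ℂ) := by
  rw [Complex.ofReal_pow, ← Complex.mul_conj', mask_eq_sum_fourierChar]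
  simp only [map_mul, map_inv₀, map_sum, Complex.conj_natCast, ← Circle.coe_inv_eq_conj,
    ← AddChar.map_neg_eq_inv]
  rw [mul_mul_mul_comm, ← sq, sum_mul_sum]
  simp only [← Circle.coe_mul, ← AddChar.map_add_eq_mul, sub_eq_add_neg, add_mul, neg_mul]

end Mask

section Hadamard

/-- `(q, E, L)` is a Hadamard triple: the matrix `(e^{2πi d l / q})` indexed by `d ∈ E` and `l ∈ L`
is, up to scaling, unitary. It is normalised by `0 ∈ L`. -/
structure IsHadamardTriple (q : ℕ) (E : Finset ℕ) (L : Finset ℤ) : Prop where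
  zero_mem : 0 ∈ L
  card_eq : L.card = E.card
  orthogonal : ∀ d ∈ E, ∀ d' ∈ E, d ≠ d' → ∑ l ∈ L, (𝐞 ((d - d') * (l / q)) : ℂ) = 0

variable {q : ℕ} {E : Finset ℕ} {L : Finset ℤ}

namespace IsHadamardTriple

lemma nonempty (h : IsHadamardTriple q E L) : E.Nonempty :=
  card_ne_zero.1 (h.card_eq ▸ card_ne_zero_of_mem h.zero_mem)

lemma isParseval (h : IsHadamardTriple q E L) :
    IsParseval (mask E) fun l : L => ((l : ℤ) : ℝ) / q := fun ξ => by
  have hcard : (E.card : ℂ) ≠ 0 := by exact_mod_cast h.nonempty.card_ne_zero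
  have hinner (d : ℕ) (hd : d ∈ E) (d' : ℕ) (hd' : d' ∈ E) :
      ∑ l ∈ L, (𝐞 ((d - d') * (ξ + l / q)) : ℂ) = if d = d' then (E.card : ℂ) else 0 := by
    split_ifs with hdd'
    · simp [hdd', h.card_eq]
    · simp only [mul_add, AddChar.map_add_eq_mul, Circle.coe_mul]
      rw [← mul_sum, h.orthogonal d hd d' hd' hdd', mul_zero]
  have hsum : ∑ l ∈ L, ((‖mask E (ξ + l / q)‖ ^ 2 : ℝ) : ℂ) = 1 := by
    simp only [norm_mask_sq]
    rw [← mul_sum, sum_comm, sum_congr rfl fun d _ => sum_comm,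
      sum_congr rfl fun d hd => sum_congr rfl fun d' hd' => hinner d hd d' hd']
    simp only [sum_ite_eq, sum_ite_mem, inter_self, sum_const, nsmul_eq_mul]
    field_simp
  convert! hasSum_fintype _
  rw [univ_eq_attach, sum_attach L fun l => ‖mask E (ξ + (l : ℝ) / q)‖ ^ 2]
  exact_mod_cast hsum.symm

lemma of_injOn_mod_card (hq : 0 < q) (hdvd : E.card ∣ q)
    (hE : Set.InjOn (· % E.card) (E : Set ℕ)) :
    IsHadamardTriple q E ((range E.card).image fun j : ℕ => ((q / E.card : ℕ) : ℤ) * j) := by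
  set N := E.card
  obtain ⟨c, rfl⟩ := hdvd
  have hN : 0 < N := Nat.pos_of_mul_pos_right hq
  have hc : 0 < c := Nat.pos_of_mul_pos_left hq
  rw [Nat.mul_div_cancel_left c hN]
  have hinj : Function.Injective fun j : ℕ => (c : ℤ) * j := fun i j hij => by
    simpa [hc.ne'] using hij
  have hcard : ((range N).image fun j : ℕ => (c : ℤ) * j).card = N := by
    rw [card_image_of_injective _ hinj, card_range]
  refine ⟨mem_image.2 ⟨0, mem_range.2 hN, by simp⟩, hcard, fun d hd d' hd' hdd' => ?_⟩
  have hndvd : ¬(N : ℤ) ∣ d - d' := fun h =>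
    hdd' (hE hd hd' (Nat.modEq_iff_dvd.2 h).symm)
  rw [sum_image fun _ _ _ _ h => hinj h, ← sum_range_fourierChar_eq_zero hndvd]
  congr! 4 with j
  push_cast
  field_simp

lemma image_mul {g : ℕ} (hg : 0 < g) (h : IsHadamardTriple q E L) :
    IsHadamardTriple (g * q) (E.image (g * ·)) L where
  zero_mem := h.zero_mem
  card_eq := by rw [card_image_of_injective _ (mul_right_injective₀ hg.ne'), h.card_eq]
  orthogonal := by
    simp only [forall_mem_image]
    intro d hd d' hd' hdd'
    rw [← h.orthogonal d hd d' hd' (fun h => hdd' (h ▸ rfl))]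
    congr! 4 with l
    push_cast
    field_simp

end IsHadamardTriple

variable {p : ℕ → ℕ} {D : ℕ → Finset ℕ} {n : ℕ}

lemma T1cond.exists_isHadamardTriple (hp : 0 < p n) (h : T1cond p D n) :
    ∃ L, IsHadamardTriple (p n) (D n) L := by
  obtain ⟨N, -, hdvd, -, hD⟩ := h
  rw [hD]
  refine ⟨_, .of_injOn_mod_card hp (by rwa [card_range]) fun a ha b hb hab => ?_⟩
  simpa only [card_range, Nat.mod_eq_of_lt (mem_range.1 ha), Nat.mod_eq_of_lt (mem_range.1 hb)]
    using hab

lemma T2cond.card_eq_three (h : T2cond p D n) : (D n).card = 3 := by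
  obtain ⟨a, b, -, -, -, hmod, -, hD⟩ := h
  rw [hD]
  exact Finset.card_eq_three.2 ⟨0, a, b, by grind, by grind, by grind, rfl⟩

lemma T2cond.exists_isHadamardTriple (hp : 0 < p n) (h : T2cond p D n) :
    ∃ L, IsHadamardTriple (p n) (D n) L := by
  have hcard := h.card_eq_three
  obtain ⟨a, b, -, -, -, hmod, hdvd, hD⟩ := h
  refine ⟨_, .of_injOn_mod_card hp (hcard ▸ hdvd) ?_⟩
  rw [hcard, hD]
  intro x hx y hy hxy
  simp only [coe_insert, coe_singleton, Set.mem_insert_iff, Set.mem_singleton_iff] at hx hy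
  grind

lemma T3cond.exists_isHadamardTriple (h : T3cond p D n) :
    ∃ L, IsHadamardTriple (p n) (D n) L := by
  obtain ⟨d, hd, hdp, heven, hD⟩ := h
  set g := Nat.gcd d (p n)
  have hg : 0 < g := Nat.gcd_pos_of_pos_left _ hd
  have hodd : d / g % 2 = 1 := by
    have hcop := Nat.coprime_div_gcd_div_gcd hg
    by_contra hne
    have := Nat.dvd_gcd (show 2 ∣ d / g by grind) heven
    rw [hcop] at this
    norm_num at this
  have hcard : ({0, d / g} : Finset ℕ).card = 2 := card_pair (by grind)
  have hpair : IsHadamardTriple (p n / g) {0, d / g} _ :=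
    .of_injOn_mod_card (Nat.div_pos (Nat.gcd_le_right _ (by grind)) hg) (by rwa [hcard]) (by
      rw [hcard]
      intro x hx y hy hxy
      simp only [coe_insert, coe_singleton, Set.mem_insert_iff, Set.mem_singleton_iff] at hx hy
      grind)
  have := hpair.image_mul hg
  rw [Nat.mul_div_cancel' (Nat.gcd_dvd_right _ _), image_insert, image_singleton, mul_zero,
    Nat.mul_div_cancel' (Nat.gcd_dvd_left _ _), ← hD] at this
  exact ⟨_, this⟩

end Hadamard

section Moran

variable {p : ℕ → ℕ} {D : ℕ → Finset ℕ}

lemma Pprod_pos (hp : ∀ n, 1 ≤ n → 0 < p n) (n : ℕ) : 0 < Pprod p n :=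
  prod_pos fun i hi => hp i (mem_Icc.1 hi).1

lemma Pprod_succ (p : ℕ → ℕ) (n : ℕ) : Pprod p (n + 1) = Pprod p n * p (n + 1) :=
  prod_Icc_succ_top n.succ_pos p

lemma Pprod_dvd_Pprod (p : ℕ → ℕ) {m n : ℕ} (hmn : m ≤ n) : Pprod p m ∣ Pprod p n :=
  prod_dvd_prod_of_subset _ _ _ (Icc_subset_Icc_right hmn)

lemma tendsto_Pprod_atTop {N : ℕ} (hp : ∀ n, 1 ≤ n → 0 < p n) (hN : ∀ n, N < n → 1 < p n) :
    Tendsto (Pprod p) atTop atTop := by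
  have hmono : StrictMono fun i => Pprod p (i + N) := strictMono_nat_of_lt_succ fun i => by
    rw [add_right_comm, Pprod_succ]
    exact lt_mul_of_one_lt_right (Pprod_pos hp _) (hN _ (by lia))
  exact (tendsto_add_atTop_iff_nat N).1 hmono.tendsto_atTop

/-- The Fourier transform `∏_{n < j ≤ m} m_{D j}(ξ / P j)` of the convolution
`δ_{P_{n+1}⁻¹D_{n+1}} ∗ ⋯ ∗ δ_{Pₘ⁻¹Dₘ}`, up to the sign of `ξ`. -/
def maskProd (p : ℕ → ℕ) (D : ℕ → Finset ℕ) (n m : ℕ) (ξ : ℝ) : ℂ :=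
  ∏ j ∈ Ioc n m, mask (D j) (ξ / Pprod p j)

lemma maskProd_eq_one_of_le {n m : ℕ} (h : m ≤ n) (ξ : ℝ) : maskProd p D n m ξ = 1 := by
  rw [maskProd, Ioc_eq_empty_of_le h, prod_empty]

lemma maskProd_mul_maskProd {n k m : ℕ} (hnk : n ≤ k) (hkm : k ≤ m) (ξ : ℝ) :
    maskProd p D n k ξ * maskProd p D k m ξ = maskProd p D n m ξ :=
  prod_Ioc_consecutive _ hnk hkm

lemma maskProd_succ_right {n m : ℕ} (h : n ≤ m) (ξ : ℝ) :
    maskProd p D n (m + 1) ξ = maskProd p D n m ξ * mask (D (m + 1)) (ξ / Pprod p (m + 1)) :=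
  prod_Ioc_succ_top h _

lemma maskProd_succ_left {n m : ℕ} (h : n < m) (ξ : ℝ) :
    maskProd p D n m ξ = mask (D (n + 1)) (ξ / Pprod p (n + 1)) * maskProd p D (n + 1) m ξ := by
  rw [← maskProd_mul_maskProd n.le_succ h, maskProd_succ_right le_rfl, maskProd_eq_one_of_le le_rfl,
    one_mul]

lemma maskProd_zero_right (hD : ∀ n, 1 ≤ n → (D n).Nonempty) (n m : ℕ) :
    maskProd p D n m 0 = 1 :=
  prod_eq_one fun j hj => by
    rw [zero_div, mask_zero (hD j (Nat.one_le_of_lt (mem_Ioc.1 hj).1))]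

lemma maskProd_add_Pprod_mul (hp : ∀ n, 1 ≤ n → 0 < p n) (n : ℕ) (ξ : ℝ) (k : ℤ) :
    maskProd p D 0 n (ξ + Pprod p n * k) = maskProd p D 0 n ξ := by
  refine prod_congr rfl fun j hj => ?_
  obtain ⟨c, hc⟩ := Pprod_dvd_Pprod p (mem_Ioc.1 hj).2
  have hPj : (Pprod p j : ℝ) ≠ 0 := by exact_mod_cast (Pprod_pos hp j).ne'
  have hmultiple : (ξ + Pprod p n * k) / Pprod p j = ξ / Pprod p j + ((c * k : ℤ) : ℝ) := by
    rw [hc]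
    push_cast
    field_simp
  rw [hmultiple, mask_add_intCast]

lemma isProbabilityMeasure_unifD {E : Finset ℕ} (hE : E.Nonempty) (s : ℝ) :
    IsProbabilityMeasure (unifD E s) := by
  refine ⟨?_⟩
  simp only [unifD, Measure.smul_apply, Measure.finsetSum_apply, measure_univ, sum_const,
    nsmul_eq_mul, mul_one, smul_eq_mul]
  exact ENNReal.inv_mul_cancel (by exact_mod_cast hE.card_ne_zero) (ENNReal.natCast_ne_top _)

lemma isProbabilityMeasure_muN (hD : ∀ n, 1 ≤ n → (D n).Nonempty) :
    ∀ n, IsProbabilityMeasure (muN p D n)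
  | 0 => Measure.dirac.isProbabilityMeasure
  | n + 1 => by
    have := isProbabilityMeasure_muN hD n
    have := isProbabilityMeasure_unifD (hD (n + 1) n.succ_pos) (Pprod p (n + 1) : ℝ)⁻¹
    rw [muN]
    infer_instance

lemma charFun_unifD (E : Finset ℕ) (s ξ : ℝ) :
    charFun (unifD E s) (2 * π * ξ) = mask E (ξ * s) := by
  have hintegrable (d : ℕ) :
      Integrable (fun x => (𝐞 (ξ * x) : ℂ)) (Measure.dirac (s * (d : ℝ))) :=
    integrable_dirac (by simp)
  rw [charFun_eq_integral_fourierChar, unifD, integral_smul_measure,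
    integral_finsetSum_measure fun d _ => hintegrable d, mask_eq_sum_fourierChar]
  simp only [integral_dirac, ENNReal.toReal_inv, ENNReal.toReal_natCast, Complex.real_smul,
    Complex.ofReal_inv, Complex.ofReal_natCast, mul_left_comm _ ξ, mul_comm s]

lemma charFun_muN (hD : ∀ n, 1 ≤ n → (D n).Nonempty) (n : ℕ) (ξ : ℝ) :
    charFun (muN p D n) (2 * π * ξ) = maskProd p D 0 n ξ := by
  induction n with
  | zero => simp [muN, maskProd]
  | succ n ih =>
    have := isProbabilityMeasure_muN (p := p) hD n
    have := isProbabilityMeasure_unifD (hD (n + 1) n.succ_pos) (Pprod p (n + 1) : ℝ)⁻¹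
    rw [muN, charFun_conv, ih, charFun_unifD, maskProd_succ_right n.zero_le, div_eq_mul_inv]

lemma tendsto_maskProd_charFun {μ : Measure ℝ} (hD : ∀ n, 1 ≤ n → (D n).Nonempty)
    (hμ : IsMoran p D μ) (ξ : ℝ) :
    Tendsto (maskProd p D 0 · ξ) atTop (nhds (charFun μ (2 * π * ξ))) := by
  have hprob := hμ.1
  let ν (n : ℕ) : ProbabilityMeasure ℝ := ⟨muN p D n, isProbabilityMeasure_muN hD n⟩
  have hweak : Tendsto ν atTop (nhds ⟨μ, hprob⟩) :=
    ProbabilityMeasure.tendsto_iff_forall_integral_tendsto.2 hμ.2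
  simpa only [ν, ProbabilityMeasure.coe_mk, charFun_muN hD] using
    ProbabilityMeasure.tendsto_iff_tendsto_charFun.1 hweak (2 * π * ξ)

end Moran

section Cosines

lemma cos_sum_abs_le_prod_abs_cos {ι : Type*} (s : Finset ι) (a : ι → ℝ)
    (hs : ∑ i ∈ s, |a i| ≤ π / 2) : cos (∑ i ∈ s, |a i|) ≤ ∏ i ∈ s, |cos (a i)| := by
  classical
  induction s using Finset.induction_on with
  | empty => simp
  | insert i s hi ih =>
    rw [sum_insert hi] at hs ⊢
    rw [prod_insert hi, cos_add, ← cos_abs (a i)]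
    have hsum_nonneg : 0 ≤ ∑ j ∈ s, |a j| := sum_nonneg fun j _ => abs_nonneg _
    have hcos_nonneg : 0 ≤ cos |a i| := cos_nonneg_of_neg_pi_div_two_le_of_le
      (by linarith [abs_nonneg (a i), pi_pos]) (by linarith)
    have hsin_nonneg : 0 ≤ sin |a i| * sin (∑ j ∈ s, |a j|) := mul_nonneg
      (sin_nonneg_of_nonneg_of_le_pi (abs_nonneg _) (by linarith [pi_pos]))
      (sin_nonneg_of_nonneg_of_le_pi hsum_nonneg (by linarith [abs_nonneg (a i), pi_pos]))
    rw [abs_of_nonneg hcos_nonneg]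
    calc cos |a i| * cos (∑ j ∈ s, |a j|) - sin |a i| * sin (∑ j ∈ s, |a j|)
        ≤ cos |a i| * cos (∑ j ∈ s, |a j|) := sub_le_self _ hsin_nonneg
      _ ≤ cos |a i| * ∏ j ∈ s, |cos (a j)| :=
          mul_le_mul_of_nonneg_left (ih (by linarith [abs_nonneg (a i)])) hcos_nonneg

lemma abs_prod_sub_prod_le_sum {ι : Type*} (s : Finset ι) {f g : ι → ℝ}
    (hf : ∀ i ∈ s, |f i| ≤ 1) (hg : ∀ i ∈ s, |g i| ≤ 1) :
    |∏ i ∈ s, f i - ∏ i ∈ s, g i| ≤ ∑ i ∈ s, |f i - g i| := by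
  classical
  induction s using Finset.induction_on with
  | empty => simp
  | insert i s hi ih =>
    rw [prod_insert hi, prod_insert hi, sum_insert hi]
    have hfi := hf i (mem_insert_self i s)
    have hgs : |∏ j ∈ s, g j| ≤ 1 := by
      rw [abs_prod]
      exact prod_le_one (fun _ _ => abs_nonneg _) fun j hj => hg j (mem_insert_of_mem hj)
    calc |f i * ∏ j ∈ s, f j - g i * ∏ j ∈ s, g j|
        = |(f i - g i) * ∏ j ∈ s, g j + f i * (∏ j ∈ s, f j - ∏ j ∈ s, g j)| := by ring_nf
      _ ≤ |f i - g i| * |∏ j ∈ s, g j| + |f i| * |∏ j ∈ s, f j - ∏ j ∈ s, g j| := by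
          rw [← abs_mul, ← abs_mul]
          exact abs_add_le _ _
      _ ≤ |f i - g i| + ∑ j ∈ s, |f j - g j| := by
          refine add_le_add (mul_le_of_le_one_right (abs_nonneg _) hgs)
            ((mul_le_of_le_one_left (abs_nonneg _) hfi).trans (ih ?_ ?_))
          · exact fun j hj => hf j (mem_insert_of_mem hj)
          · exact fun j hj => hg j (mem_insert_of_mem hj)

lemma one_div_ten_le_abs_cos {φ : ℝ} (h : |φ| ≤ 9 / 20) : 1 / 10 ≤ |cos (π * φ)| := by
  have hjordan := one_sub_mul_le_cos (x := π * |φ|) (by positivity) (by nlinarith [pi_pos])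
  have hcancel : 2 / π * (π * |φ|) = 2 * |φ| := by field_simp
  rw [hcancel, ← abs_of_pos pi_pos, ← abs_mul, cos_abs] at hjordan
  exact le_trans (by linarith) (hjordan.trans (le_abs_self _))

-- With `r = q - d`, the shift by `k = ⌊q / (4 r)⌋` moves `d y / q` by about `-1/4` modulo `1`.
lemma exists_int_one_div_ten_le_abs_cos_of_nonneg {q d : ℕ} (hd : 0 < d) (hdq : d < q) {y : ℝ}
    (hy₀ : 0 ≤ y) (hy : y ≤ 1 / 2) :
    ∃ k : ℤ, |y + k| ≤ q / 3 ∧ 1 / 10 ≤ |cos (π * (d * (y + k) / q))| := by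
  have hd' : (1 : ℝ) ≤ d := by exact_mod_cast hd
  have hdq' : (d : ℝ) + 1 ≤ q := by exact_mod_cast hdq
  have hq : (0 : ℝ) < q := by linarith
  rcases le_or_gt (d * y / q) (9 / 20) with hsmall | hlarge
  · refine ⟨0, ?_, one_div_ten_le_abs_cos ?_⟩
    · rw [Int.cast_zero, add_zero, abs_of_nonneg hy₀]
      linarith
    · rwa [Int.cast_zero, add_zero, abs_of_nonneg (by positivity)]
  rw [lt_div_iff₀ hq] at hlarge
  set r : ℝ := q - d with hr
  have hr_one : 1 ≤ r := by linarith
  have hr_lt : 10 * r < q := by nlinarith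
  set k := ⌊(q : ℝ) / (4 * r)⌋
  have hk_nonneg : (0 : ℝ) ≤ k := by exact_mod_cast Int.floor_nonneg.2 (by positivity)
  have hk_le : k * (4 * r) ≤ q := (le_div_iff₀ (by positivity)).1 (Int.floor_le _)
  have hk_gt : q < (k + 1) * (4 * r) := (div_lt_iff₀ (by positivity)).1 (Int.lt_floor_add_one _)
  refine ⟨k, ?_, ?_⟩
  · rw [abs_of_nonneg (by positivity)]
    nlinarith
  · have hshift : π * (d * (y + k) / q) = π * ((d * y - k * r) / q) + k * π := by
      rw [hr]
      field_simp
      ring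
    rw [hshift, cos_add_int_mul_pi, abs_mul, abs_zpow, abs_neg, abs_one, one_zpow, one_mul]
    refine one_div_ten_le_abs_cos ?_
    rw [abs_div, abs_of_pos hq, div_le_iff₀ hq, abs_le]
    have : d * y ≤ q / 2 := by nlinarith
    constructor <;> nlinarith

lemma exists_int_one_div_ten_le_abs_cos {q d : ℕ} (hd : 0 < d) (hdq : d < q) (x : ℝ) :
    ∃ k : ℤ, |x + k| ≤ q / 3 ∧ 1 / 10 ≤ |cos (π * (d * (x + k) / q))| := by
  obtain ⟨k, hk, hcos⟩ := exists_int_one_div_ten_le_abs_cos_of_nonneg hd hdq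
    (abs_nonneg (x - round x)) (abs_sub_round x)
  rcases abs_choice (x - round x) with hsign | hsign <;> rw [hsign] at hk hcos
  · refine ⟨k - round x, ?_⟩
    rw [show x + ((k - round x : ℤ) : ℝ) = x - round x + k by push_cast; ring]
    exact ⟨hk, hcos⟩
  · refine ⟨-k - round x, ?_⟩
    rw [show x + ((-k - round x : ℤ) : ℝ) = -(-(x - round x) + k) by push_cast; ring, abs_neg,
      mul_neg, neg_div, mul_neg, cos_neg]
    exact ⟨hk, hcos⟩

end Cosines

section PairTail

/-- From the index `n + 1` on, the digit sets are the pairs `{0, d j}` with `0 < d j < p j`. -/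
structure HasPairTail (p : ℕ → ℕ) (D : ℕ → Finset ℕ) (d : ℕ → ℕ) (n : ℕ) : Prop where
  digits_eq : ∀ j, n < j → D j = {0, d j}
  pos : ∀ j, n < j → 0 < d j
  lt : ∀ j, n < j → d j < p j

namespace HasPairTail

variable {p : ℕ → ℕ} {D : ℕ → Finset ℕ} {d : ℕ → ℕ} {n : ℕ}

lemma mono {m : ℕ} (h : HasPairTail p D d n) (hnm : n ≤ m) : HasPairTail p D d m where
  digits_eq j hj := h.digits_eq j (hnm.trans_lt hj)
  pos j hj := h.pos j (hnm.trans_lt hj)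
  lt j hj := h.lt j (hnm.trans_lt hj)

lemma norm_maskProd (h : HasPairTail p D d n) (m : ℕ) (ξ : ℝ) :
    ‖maskProd p D n m ξ‖ = ∏ j ∈ Ioc n m, |cos (π * d j * (ξ / Pprod p j))| := by
  rw [maskProd, norm_prod]
  refine prod_congr rfl fun j hj => ?_
  have hnj := (mem_Ioc.1 hj).1
  rw [h.digits_eq j hnj, norm_mask_pair (h.pos j hnj)]

lemma sum_div_Pprod_le (h : HasPairTail p D d n) (hp : ∀ n, 1 ≤ n → 0 < p n) (m : ℕ) :
    ∑ j ∈ Ioc n m, (d j / Pprod p j : ℝ) ≤ 1 / Pprod p n := by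
  rcases le_total m n with hmn | hnm
  · rw [Ioc_eq_empty_of_le hmn, sum_empty]
    positivity
  suffices ∑ j ∈ Ioc n m, (d j / Pprod p j : ℝ) ≤ 1 / Pprod p n - 1 / Pprod p m from
    this.trans (sub_le_self _ (by positivity))
  induction m, hnm using Nat.le_induction with
  | base => simp
  | succ m hnm ih =>
    have hPm : (0 : ℝ) < Pprod p m := by exact_mod_cast Pprod_pos hp m
    have hpm : (0 : ℝ) < p (m + 1) := by exact_mod_cast hp _ m.succ_pos
    have hd : (d (m + 1) : ℝ) + 1 ≤ p (m + 1) := by exact_mod_cast h.lt (m + 1) (by lia)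
    have hterm : (d (m + 1) / Pprod p (m + 1) : ℝ) ≤ 1 / Pprod p m - 1 / Pprod p (m + 1) := by
      rw [Pprod_succ, Nat.cast_mul, div_sub_div _ _ hPm.ne' (by positivity),
        div_le_div_iff₀ (by positivity) (by positivity)]
      nlinarith [mul_le_mul_of_nonneg_left hd (by positivity : (0 : ℝ) ≤ Pprod p m ^ 2 * p (m + 1))]
    rw [sum_Ioc_succ_top hnm]
    linarith

lemma sum_abs_mul_div_Pprod_le (h : HasPairTail p D d n) (hp : ∀ n, 1 ≤ n → 0 < p n) (m : ℕ)
    (ξ : ℝ) : ∑ j ∈ Ioc n m, |π * d j * (ξ / Pprod p j)| ≤ π * |ξ| / Pprod p n := by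
  calc ∑ j ∈ Ioc n m, |π * d j * (ξ / Pprod p j)|
      = π * |ξ| * ∑ j ∈ Ioc n m, (d j / Pprod p j : ℝ) := by
        rw [mul_sum]
        refine sum_congr rfl fun j _ => ?_
        rw [abs_mul, abs_mul, abs_div, abs_of_pos pi_pos, Nat.abs_cast, Nat.abs_cast]
        ring
    _ ≤ π * |ξ| * (1 / Pprod p n) :=
        mul_le_mul_of_nonneg_left (h.sum_div_Pprod_le hp m) (by positivity)
    _ = π * |ξ| / Pprod p n := by rw [mul_one_div]

lemma half_le_norm_maskProd (h : HasPairTail p D d n) (hp : ∀ n, 1 ≤ n → 0 < p n) (m : ℕ) {ξ : ℝ}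
    (hξ : |ξ| ≤ Pprod p n / 3) : 1 / 2 ≤ ‖maskProd p D n m ξ‖ := by
  have hPn : (0 : ℝ) < Pprod p n := by exact_mod_cast Pprod_pos hp n
  have hsum : ∑ j ∈ Ioc n m, |π * d j * (ξ / Pprod p j)| ≤ π / 3 := by
    refine (h.sum_abs_mul_div_Pprod_le hp m ξ).trans ?_
    rw [div_le_iff₀ hPn]
    nlinarith [pi_pos]
  rw [h.norm_maskProd, ← cos_pi_div_three]
  exact (cos_le_cos_of_nonneg_of_le_pi (sum_nonneg fun _ _ => abs_nonneg _)
    (by linarith [pi_pos]) hsum).trans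
      (cos_sum_abs_le_prod_abs_cos _ _ (by linarith [pi_pos]))

lemma norm_maskProd_sub_le (h : HasPairTail p D d n) (hp : ∀ n, 1 ≤ n → 0 < p n) (m : ℕ)
    (ξ η : ℝ) : |‖maskProd p D n m (ξ + η)‖ - ‖maskProd p D n m η‖| ≤ π * |ξ| / Pprod p n := by
  rw [h.norm_maskProd, h.norm_maskProd]
  refine (abs_prod_sub_prod_le_sum _ (fun j _ => ?_) fun j _ => ?_).trans
    ((sum_le_sum fun j _ => ?_).trans (h.sum_abs_mul_div_Pprod_le hp m ξ))
  · rw [abs_abs]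
    exact abs_cos_le_one _
  · rw [abs_abs]
    exact abs_cos_le_one _
  · refine (abs_abs_sub_abs_le_abs_sub _ _).trans ((abs_cos_sub_cos_le _ _).trans_eq ?_)
    ring_nf

-- The shift makes the first factor at least `1 / 10` and all the others together at least `1 / 2`.
lemma exists_shift (h : HasPairTail p D d n) (hp : ∀ n, 1 ≤ n → 0 < p n) (ξ : ℝ) :
    ∃ k : ℤ, ∀ m, 1 / 20 ≤ ‖maskProd p D n m (ξ + Pprod p n * k)‖ := by
  have hPn : (0 : ℝ) < Pprod p n := by exact_mod_cast Pprod_pos hp n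
  have hpn : (0 : ℝ) < p (n + 1) := by exact_mod_cast hp _ n.succ_pos
  obtain ⟨k, hk, hcos⟩ := exists_int_one_div_ten_le_abs_cos (h.pos _ n.lt_succ_self)
    (h.lt _ n.lt_succ_self) (ξ / Pprod p n)
  have hrescale : ξ + Pprod p n * k = Pprod p n * (ξ / Pprod p n + k) := by field_simp
  refine ⟨k, fun m => ?_⟩
  rcases le_or_gt m n with hmn | hnm
  · rw [maskProd_eq_one_of_le hmn, norm_one]
    norm_num
  have hfirst : 1 / 10 ≤ ‖mask (D (n + 1)) ((ξ + Pprod p n * k) / Pprod p (n + 1))‖ := by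
    rw [h.digits_eq _ n.lt_succ_self, norm_mask_pair (h.pos _ n.lt_succ_self)]
    convert hcos using 3
    rw [Pprod_succ, Nat.cast_mul]
    field_simp
  have hrest : 1 / 2 ≤ ‖maskProd p D (n + 1) m (ξ + Pprod p n * k)‖ := by
    refine (h.mono n.le_succ).half_le_norm_maskProd hp m ?_
    rw [hrescale, abs_mul, abs_of_pos hPn, Pprod_succ, Nat.cast_mul, mul_div_assoc]
    exact mul_le_mul_of_nonneg_left hk hPn.le
  rw [maskProd_succ_left hnm, norm_mul]
  calc (1 / 20 : ℝ) = 1 / 10 * (1 / 2) := by norm_num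
    _ ≤ _ := mul_le_mul hfirst hrest (by norm_num) (norm_nonneg _)

end HasPairTail

end PairTail

section FrequencySets

variable {p : ℕ → ℕ} {D : ℕ → Finset ℕ} {d : ℕ → ℕ} {n : ℕ}

/-- A set of integers that is a spectrum of the finite convolution `muN p D n` and at which the
Fourier transforms of all the remaining factors are bounded below. -/
structure IsLevelSpectrum (p : ℕ → ℕ) (D : ℕ → Finset ℕ) (n : ℕ) (S : Set ℤ) : Prop where
  isParseval : IsParseval (maskProd p D 0 n) fun l : S => (l : ℝ)
  le_norm_tail : ∀ l ∈ S, ∀ m, 1 / 20 ≤ ‖maskProd p D n m l‖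

lemma isParseval_maskProd_succ (hp : ∀ n, 1 ≤ n → 0 < p n) {ι : Type*} {e : ι → ℤ}
    (he : IsParseval (maskProd p D 0 n) fun i => (e i : ℝ)) {L : Finset ℤ}
    (hL : IsHadamardTriple (p (n + 1)) (D (n + 1)) L) :
    IsParseval (maskProd p D 0 (n + 1)) fun a : ι × L => ((e a.1 + Pprod p n * a.2 : ℤ) : ℝ) := by
  refine he.prod (Pprod p (n + 1) : ℝ)⁻¹ hL.isParseval fun ξ a => ?_
  have hPn : (Pprod p n : ℝ) ≠ 0 := by exact_mod_cast (Pprod_pos hp n).ne'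
  have hpn : (p (n + 1) : ℝ) ≠ 0 := by exact_mod_cast (hp _ n.succ_pos).ne'
  have hsplit : ξ + ((e a.1 + Pprod p n * a.2 : ℤ) : ℝ) = ξ + e a.1 + Pprod p n * (a.2 : ℤ) := by
    push_cast
    ring
  rw [maskProd_succ_right n.zero_le, norm_mul, hsplit, maskProd_add_Pprod_mul hp, Pprod_succ]
  congr 3
  push_cast
  field_simp

lemma exists_isParseval_maskProd (hp : ∀ n, 1 ≤ n → 0 < p n)
    (hH : ∀ n, 1 ≤ n → ∃ L, IsHadamardTriple (p n) (D n) L) :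
    ∀ n, ∃ (ι : Type) (e : ι → ℤ), IsParseval (maskProd p D 0 n) fun i => (e i : ℝ)
  | 0 => ⟨Unit, 0, fun ξ => by simp [maskProd]⟩
  | n + 1 => by
    obtain ⟨ι, e, he⟩ := exists_isParseval_maskProd hp hH n
    obtain ⟨L, hL⟩ := hH (n + 1) n.succ_pos
    exact ⟨ι × L, _, isParseval_maskProd_succ hp he hL⟩

lemma exists_isLevelSpectrum_of_isParseval (hp : ∀ n, 1 ≤ n → 0 < p n)
    (hD : ∀ n, 1 ≤ n → (D n).Nonempty) (h : HasPairTail p D d n) {ι : Type*} {e : ι → ℤ}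
    (he : IsParseval (maskProd p D 0 n) fun i => (e i : ℝ)) :
    ∃ S, IsLevelSpectrum p D n S ∧
      ∀ i, (∀ m, 1 / 20 ≤ ‖maskProd p D n m (e i)‖) → e i ∈ S := by
  classical
  have hshift (i : ι) : ∃ k : ℤ, (∀ m, 1 / 20 ≤ ‖maskProd p D n m (e i + Pprod p n * k)‖) ∧
      ((∀ m, 1 / 20 ≤ ‖maskProd p D n m (e i)‖) → k = 0) := by
    by_cases hi : ∀ m, 1 / 20 ≤ ‖maskProd p D n m (e i)‖
    · exact ⟨0, by simpa using hi, fun _ => rfl⟩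
    · obtain ⟨k, hk⟩ := h.exists_shift hp (e i)
      exact ⟨k, hk, fun hi' => absurd hi' hi⟩
  choose k hk hk_zero using hshift
  have hshifted : IsParseval (maskProd p D 0 n) fun i => ((e i + Pprod p n * k i : ℤ) : ℝ) :=
    fun ξ => by
      push_cast
      simpa only [← add_assoc, maskProd_add_Pprod_mul hp] using he ξ
  refine ⟨Set.range fun i => e i + Pprod p n * k i, ⟨?_, ?_⟩, fun i hi => ⟨i, ?_⟩⟩
  · exact hshifted.range (c := ((↑) : ℤ → ℝ)) (maskProd_zero_right hD 0 n)
  · rintro _ ⟨i, rfl⟩ m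
    push_cast
    exact hk i m
  · simp [hk_zero i hi]

lemma IsLevelSpectrum.exists_succ (hp : ∀ n, 1 ≤ n → 0 < p n)
    (hH : ∀ n, 1 ≤ n → ∃ L, IsHadamardTriple (p n) (D n) L) (h : HasPairTail p D d n) {S : Set ℤ}
    (hS : IsLevelSpectrum p D n S) : ∃ S', IsLevelSpectrum p D (n + 1) S' ∧ S ⊆ S' := by
  obtain ⟨L, hL⟩ := hH (n + 1) n.succ_pos
  obtain ⟨S', hS', hmem⟩ := exists_isLevelSpectrum_of_isParseval hp
    (fun j hj => (hH j hj).choose_spec.nonempty) (h.mono n.le_succ)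
    (isParseval_maskProd_succ hp hS.isParseval hL)
  refine ⟨S', hS', fun l hl => ?_⟩
  have hl' := hmem (⟨l, hl⟩, ⟨0, hL.zero_mem⟩)
  rw [mul_zero, add_zero] at hl'
  refine hl' fun m => ?_
  rcases le_or_gt m n with hmn | hnm
  · rw [maskProd_eq_one_of_le (by lia), norm_one]
    norm_num
  · refine (hS.le_norm_tail l hl m).trans ?_
    rw [maskProd_succ_left hnm, norm_mul]
    exact mul_le_of_le_one_left (norm_nonneg _) (norm_mask_le_one _ _)

lemma exists_monotone_isLevelSpectrum (hp : ∀ n, 1 ≤ n → 0 < p n)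
    (hH : ∀ n, 1 ≤ n → ∃ L, IsHadamardTriple (p n) (D n) L) (h : HasPairTail p D d n) :
    ∃ S : ℕ → Set ℤ, Monotone S ∧ ∀ i, IsLevelSpectrum p D (n + i) (S i) := by
  obtain ⟨ι, e, he⟩ := exists_isParseval_maskProd hp hH n
  obtain ⟨S₀, hS₀, -⟩ := exists_isLevelSpectrum_of_isParseval hp
    (fun j hj => (hH j hj).choose_spec.nonempty) h he
  have hstep (i : ℕ) (S : {S // IsLevelSpectrum p D (n + i) S}) :
      ∃ S' : {S // IsLevelSpectrum p D (n + (i + 1)) S}, S.1 ⊆ S'.1 := by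
    obtain ⟨S', hS', hsub⟩ := S.2.exists_succ hp hH (h.mono (n.le_add_right i))
    exact ⟨⟨S', hS'⟩, hsub⟩
  choose next hnext using hstep
  let S : ∀ i, {S // IsLevelSpectrum p D (n + i) S} := Nat.rec ⟨S₀, hS₀⟩ next
  exact ⟨fun i => (S i).1, monotone_nat_of_le_succ fun i => hnext i (S i), fun i => (S i).2⟩

end FrequencySets

section Spectrality

variable {p : ℕ → ℕ} {D : ℕ → Finset ℕ} {d : ℕ → ℕ} {n : ℕ} {μ : Measure ℝ}

lemma IsLevelSpectrum.norm_maskProd_le (hp : ∀ n, 1 ≤ n → 0 < p n)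
    (hD : ∀ n, 1 ≤ n → (D n).Nonempty) (hμ : IsMoran p D μ) (h : HasPairTail p D d n) {S : Set ℤ}
    (hS : IsLevelSpectrum p D n S) {ξ : ℝ} (hξ : π * |ξ| / Pprod p n ≤ 1 / 40) {l : ℤ}
    (hl : l ∈ S) : ‖maskProd p D 0 n (ξ + l)‖ ≤ 40 * ‖charFun μ (2 * π * (ξ + l))‖ := by
  have htail (m : ℕ) : 1 / 40 ≤ ‖maskProd p D n m (ξ + l)‖ := by
    linarith [hS.le_norm_tail l hl m, (abs_le.1 (h.norm_maskProd_sub_le hp m ξ l)).1]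
  refine ge_of_tendsto ((tendsto_maskProd_charFun hD hμ (ξ + l)).norm.const_mul 40) ?_
  filter_upwards [eventually_ge_atTop n] with m hm
  rw [← maskProd_mul_maskProd n.zero_le hm, norm_mul]
  nlinarith [norm_nonneg (maskProd p D 0 n (ξ + l)), htail m]

lemma HasPairTail.tendsto_mul_abs_div_Pprod (h : HasPairTail p D d n)
    (hp : ∀ n, 1 ≤ n → 0 < p n) (ξ : ℝ) :
    Tendsto (fun i => π * |ξ| / Pprod p (n + i)) atTop (nhds 0) := by
  have hPprod := tendsto_Pprod_atTop hp fun j hj => Nat.lt_of_le_of_lt (h.pos j hj) (h.lt j hj)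
  exact (tendsto_natCast_atTop_atTop.comp
    (hPprod.comp (tendsto_atTop_mono (Nat.le_add_left · n) tendsto_id))).const_div_atTop _

lemma exists_hasPairTail (h : ∀ᶠ n in atTop, ∃ d, 0 < d ∧ d < p n ∧ D n = {0, d}) :
    ∃ d n, HasPairTail p D d n := by
  obtain ⟨n, hn⟩ := eventually_atTop.1 h
  choose! d hpos hlt hdigits using hn
  exact ⟨d, n, fun j hj => hdigits j hj.le, fun j hj => hpos j hj.le, fun j hj => hlt j hj.le⟩

theorem moran_spectral_of_finitely_many_large_general (hp : ∀ n, 1 ≤ n → 0 < p n)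
    (hH : ∀ n, 1 ≤ n → ∃ L, IsHadamardTriple (p n) (D n) L)
    (hpair : ∀ᶠ n in atTop, ∃ d, 0 < d ∧ d < p n ∧ D n = {0, d}) (hμ : IsMoran p D μ) :
    IsSpectralMeasure μ := by
  have := hμ.1
  have hD (j : ℕ) (hj : 1 ≤ j) : (D j).Nonempty := (hH j hj).choose_spec.nonempty
  obtain ⟨d, n, h⟩ := exists_hasPairTail hpair
  obtain ⟨S, hS_mono, hS⟩ := exists_monotone_isLevelSpectrum hp hH h
  have hlim (ξ : ℝ) : Tendsto (fun i => maskProd p D 0 (n + i) ξ) atTop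
      (nhds (charFun μ (2 * π * ξ))) :=
    (tendsto_maskProd_charFun hD hμ ξ).comp (tendsto_atTop_mono (Nat.le_add_left · n) tendsto_id)
  have hparseval := IsParseval.iUnion_of_tendsto hS_mono (fun i => (hS i).isParseval) hlim
    (C := 40) fun ξ => by
      filter_upwards [(h.tendsto_mul_abs_div_Pprod hp ξ).eventually_le_const
        (by norm_num : (0 : ℝ) < 1 / 40)] with i hi l hl
      exact (hS i).norm_maskProd_le hp hD hμ (h.mono (n.le_add_right i)) hi hl
  exact ⟨_, Set.countable_range _, isSpectrum_range hparseval⟩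

lemma SatisfiesT.exists_isHadamardTriple (hp : ∀ n, 1 ≤ n → 0 < p n) (h : SatisfiesT p D) (n : ℕ)
    (hn : 1 ≤ n) : ∃ L, IsHadamardTriple (p n) (D n) L := by
  rcases h.1 n hn with h₁ | h₂ | h₃
  · exact h₁.exists_isHadamardTriple (hp n hn)
  · exact h₂.exists_isHadamardTriple (hp n hn)
  · exact h₃.exists_isHadamardTriple

lemma SatisfiesT.eventually_eq_pair (h : SatisfiesT p D)
    (hfin : {n : ℕ | 1 ≤ n ∧ 3 ≤ (D n).card}.Finite) :
    ∀ᶠ n in atTop, ∃ d, 0 < d ∧ d < p n ∧ D n = {0, d} := by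
  filter_upwards [eventually_ge_atTop 1, Nat.cofinite_eq_atTop ▸ hfin.eventually_cofinite_notMem]
    with n hn hsmall
  replace hsmall : (D n).card < 3 := not_le.1 fun hcard => hsmall ⟨hn, hcard⟩
  rcases h.1 n hn with ⟨N, hN, -, -, hDn⟩ | h₂ | ⟨d, hd, hdp, -, hDn⟩
  · rw [hDn, card_range] at hsmall
    lia
  · exact absurd h₂.card_eq_three hsmall.ne
  · exact ⟨d, hd, hdp, hDn⟩

end Spectrality

/-- Proposition 5.3. If `(p, D)` satisfies (T1)–(T3) and only
finitely many `n` have `#(D n) ≥ 3`, then the Moran measure is spectral. -/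
theorem moran_spectral_of_finitely_many_large (p : ℕ → ℕ) (D : ℕ → Finset ℕ)
    (μ : Measure ℝ) (hp : ∀ n, 1 ≤ n → 1 < p n) (hT : SatisfiesT p D)
    (hfin : {n : ℕ | 1 ≤ n ∧ 3 ≤ (D n).card}.Finite) (hμ : IsMoran p D μ) :
    IsSpectralMeasure μ :=
  have hp_pos (n : ℕ) (hn : 1 ≤ n) : 0 < p n := Nat.zero_lt_of_lt (hp n hn)
  moran_spectral_of_finitely_many_large_general hp_pos (hT.exists_isHadamardTriple hp_pos)
    (hT.eventually_eq_pair hfin) hμ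

end
end

section
/- Suppose the pair (𝒫,𝒟) satisfies conditions (T1)–(T3). Then for every n ≥ 1 there exists a finite set L_n ⊂ ℤ with #L_n = #𝒟_n such that (p_n, 𝒟_n, L_n) is a Hadamard triple. -/
open MeasureTheory Filter Finset Real
open scoped ENNReal NNReal

noncomputable section

/-!
The three digit sets have one shape: `D = g • E`, where `E` represents every residue class modulo
`N` exactly once and `g * N ∣ p`. Writing `p = g * N * q`, the set `L = q • E` works: for
`l = q * x` and `l' = q * y` the phase of `d = g * e` is `e * (x - y) / N`, so the exponential sum
runs over all values of the character `t ↦ exp (2πi t (x - y) / N)` of `ℤ/N`, and it vanishes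
because this character is nontrivial as soon as `x ≢ y` modulo `N`.
-/

/-- `E` is a complete residue system modulo `N`: reduction modulo `N` maps it bijectively onto
`ZMod N`. Both the digit sets and their spectra are dilates of such systems. -/
def IsCompleteResidueSystem (N : ℕ) (E : Finset ℕ) : Prop :=
  Set.BijOn (Nat.cast : ℕ → ZMod N) E Set.univ

/-- `D` is a dilate `g • E` of a complete residue system `E` modulo `N` with `g * N ∣ p`: the
common form of the digit sets in (T1)–(T3). -/
def IsResidueSystemDilate (p : ℕ) (D : Finset ℕ) : Prop :=
  ∃ g N E, g * N ∣ p ∧ IsCompleteResidueSystem N E ∧ D = E.image (g * ·)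

/-- `(p, D, L)` is a Hadamard triple. Unitarity of the square matrix `(1/√N)[e^{2πidℓ/p}]` is
expressed by `#L = #D` and the orthogonality of distinct columns, whose norms are `1` anyway. -/
def IsHadamardTriple_s9 (p : ℕ) (D : Finset ℕ) (L : Finset ℤ) : Prop :=
  L.card = D.card ∧ ∀ l ∈ L, ∀ l' ∈ L, l ≠ l' →
    ∑ d ∈ D, Complex.exp (2 * Real.pi * Complex.I * (d : ℝ) * ((l : ℝ) - (l' : ℝ)) / (p : ℝ)) = 0

section CompleteResidueSystem

variable {N : ℕ} [NeZero N] {E : Finset ℕ}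

lemma isCompleteResidueSystem_of_injOn_of_card
    (hinj : Set.InjOn (Nat.cast : ℕ → ZMod N) E) (hcard : E.card = N) :
    IsCompleteResidueSystem N E := by
  have himage : E.image (Nat.cast : ℕ → ZMod N) = Finset.univ := by
    rw [← Finset.card_eq_iff_eq_univ, Finset.card_image_of_injOn hinj, hcard, ZMod.card]
  refine ⟨Set.mapsTo_univ _ _, hinj, ?_⟩
  rw [Set.SurjOn, ← Finset.coe_image, himage, Finset.coe_univ]

lemma IsCompleteResidueSystem.sum_natCast {M : Type*} [AddCommMonoid M]
    (hE : IsCompleteResidueSystem N E) (f : ZMod N → M) :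
    ∑ e ∈ E, f e = ∑ x, f x :=
  Finset.sum_nbij Nat.cast (fun _ _ => Finset.mem_univ _) hE.injOn
    (by simpa only [Finset.coe_univ] using hE.surjOn) (fun _ _ => rfl)

lemma IsCompleteResidueSystem.card_eq (hE : IsCompleteResidueSystem N E) : E.card = N := by
  rw [Finset.card_eq_sum_ones, hE.sum_natCast (fun _ => 1), ← Finset.card_eq_sum_ones,
    Finset.card_univ, ZMod.card]

lemma IsCompleteResidueSystem.sum_mulShift_eq_zero {R : Type*} [CommRing R] [IsDomain R]
    (hE : IsCompleteResidueSystem N E) {ψ : AddChar (ZMod N) R} (hψ : ψ.IsPrimitive)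
    {t : ZMod N} (ht : t ≠ 0) :
    ∑ e ∈ E, ψ (e * t) = 0 := by
  rw [hE.sum_natCast (fun x => ψ (x * t)), AddChar.sum_mulShift t hψ, if_neg ht, Nat.cast_zero]

end CompleteResidueSystem

lemma isCompleteResidueSystem_range (N : ℕ) [NeZero N] :
    IsCompleteResidueSystem N (Finset.range N) := by
  refine isCompleteResidueSystem_of_injOn_of_card (fun i hi j hj hij => ?_) (Finset.card_range N)
  rw [ZMod.natCast_eq_natCast_iff] at hij
  exact hij.eq_of_lt_of_lt (Finset.mem_range.mp hi) (Finset.mem_range.mp hj)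

lemma isCompleteResidueSystem_zero_odd {d : ℕ} (hd : Odd d) :
    IsCompleteResidueSystem 2 {0, d} := by
  refine isCompleteResidueSystem_of_injOn_of_card ?_ (Finset.card_pair hd.pos.ne)
  rw [Finset.coe_pair, Set.injOn_pair, Nat.cast_zero, hd.natCast_zmod_two]
  exact fun h => absurd h zero_ne_one

lemma isCompleteResidueSystem_zero_one_two {a b : ℕ}
    (hab : a % 3 = 1 ∧ b % 3 = 2 ∨ a % 3 = 2 ∧ b % 3 = 1) :
    IsCompleteResidueSystem 3 {0, a, b} := by
  refine isCompleteResidueSystem_of_injOn_of_card (fun x hx y hy hxy => ?_)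
    (Finset.card_eq_three.mpr ⟨0, a, b, by omega, by omega, by omega, rfl⟩)
  rw [ZMod.natCast_eq_natCast_iff'] at hxy
  simp only [Finset.coe_insert, Finset.coe_singleton, Set.mem_insert_iff,
    Set.mem_singleton_iff] at hx hy
  omega

lemma exp_two_pi_mul_div_eq_stdAddChar {g N q : ℕ} [NeZero N] (hg : g ≠ 0) (hq : q ≠ 0)
    (e x y : ℕ) :
    Complex.exp (2 * Real.pi * Complex.I * ((g * e : ℕ) : ℝ)
        * (((q * x : ℤ) : ℝ) - ((q * y : ℤ) : ℝ)) / ((g * N * q : ℕ) : ℝ)) =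
      ZMod.stdAddChar ((e : ZMod N) * ((x : ZMod N) - (y : ZMod N))) := by
  have hN : (N : ℂ) ≠ 0 := Nat.cast_ne_zero.mpr (NeZero.ne N)
  have hcast : (e : ZMod N) * ((x : ZMod N) - (y : ZMod N)) = ((e * (x - y) : ℤ) : ZMod N) := by
    push_cast
    rfl
  rw [hcast, ZMod.stdAddChar_coe]
  congr 1
  push_cast
  field_simp

lemma IsCompleteResidueSystem.isHadamardTriple {g N q : ℕ} {E F : Finset ℕ}
    (hE : IsCompleteResidueSystem N E) (hF : IsCompleteResidueSystem N F) (hp : g * N * q ≠ 0) :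
    IsHadamardTriple_s9 (g * N * q) (E.image (g * ·)) (F.image (fun x : ℕ => (q * x : ℤ))) := by
  obtain ⟨⟨hg, hN⟩, hq⟩ : (g ≠ 0 ∧ N ≠ 0) ∧ q ≠ 0 := by simpa only [mul_ne_zero_iff] using hp
  have : NeZero N := ⟨hN⟩
  have hg_inj : Function.Injective (g * · : ℕ → ℕ) := mul_right_injective₀ hg
  have hq_inj : Function.Injective (fun x : ℕ => (q * x : ℤ)) :=
    (mul_right_injective₀ (Nat.cast_ne_zero.mpr hq)).comp Nat.cast_injective
  constructor
  · rw [Finset.card_image_of_injective _ hq_inj, Finset.card_image_of_injective _ hg_inj,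
      hE.card_eq, hF.card_eq]
  · simp only [Finset.forall_mem_image]
    intro x hx y hy hne
    have hxy : (x : ZMod N) - y ≠ 0 :=
      sub_ne_zero.mpr (hF.injOn.ne hx hy (ne_of_apply_ne (fun x : ℕ => (q * x : ℤ)) hne))
    rw [Finset.sum_image hg_inj.injOn]
    simp only [exp_two_pi_mul_div_eq_stdAddChar hg hq]
    exact hE.sum_mulShift_eq_zero (ZMod.isPrimitive_stdAddChar N) hxy

lemma IsCompleteResidueSystem.isResidueSystemDilate {p N : ℕ} {E : Finset ℕ}
    (hE : IsCompleteResidueSystem N E) (hN : N ∣ p) : IsResidueSystemDilate p E :=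
  ⟨1, N, E, by rwa [one_mul], hE, by simp only [one_mul, Finset.image_id']⟩

lemma isResidueSystemDilate_zero_pair {p d : ℕ} (hd : d ≠ 0) (heven : 2 ∣ p / Nat.gcd d p) :
    IsResidueSystemDilate p {0, d} := by
  have hgcd : 0 < Nat.gcd d p := Nat.gcd_pos_of_pos_left p (Nat.pos_of_ne_zero hd)
  have hodd : Odd (d / Nat.gcd d p) :=
    ((Nat.coprime_div_gcd_div_gcd hgcd).coprime_dvd_right heven).symm.odd_of_left
  refine ⟨Nat.gcd d p, 2, {0, d / Nat.gcd d p},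
    Nat.mul_dvd_of_dvd_div (Nat.gcd_dvd_right d p) heven,
    isCompleteResidueSystem_zero_odd hodd, ?_⟩
  rw [Finset.image_insert, Finset.image_singleton, mul_zero,
    Nat.mul_div_cancel' (Nat.gcd_dvd_left d p)]

lemma SatisfiesT.isResidueSystemDilate {p : ℕ → ℕ} {D : ℕ → Finset ℕ} (hT : SatisfiesT p D)
    {n : ℕ} (hn : 1 ≤ n) : IsResidueSystemDilate (p n) (D n) := by
  rcases hT.1 n hn with ⟨N, hN, hdvd, -, hD⟩ | ⟨a, b, -, -, -, hmod, hdvd, hD⟩ |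
    ⟨d, hd, -, heven, hD⟩ <;> rw [hD]
  · have : NeZero N := ⟨by omega⟩
    exact (isCompleteResidueSystem_range N).isResidueSystemDilate hdvd
  · exact (isCompleteResidueSystem_zero_one_two hmod).isResidueSystemDilate hdvd
  · exact isResidueSystemDilate_zero_pair hd.ne' heven

theorem exists_hadamard_triple_general {p : ℕ} (hp : p ≠ 0) {D : Finset ℕ}
    (hD : IsResidueSystemDilate p D) : ∃ L : Finset ℤ, IsHadamardTriple_s9 p D L := by
  obtain ⟨g, N, E, ⟨q, rfl⟩, hE, rfl⟩ := hD
  exact ⟨_, hE.isHadamardTriple hE hp⟩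

/-- Lemma 3.2 / pro3.2. Under (T1)–(T3), for every `n ≥ 1` there is
a finite set `L ⊂ ℤ` with `#L = #(D n)` such that `(p n, D n, L)` is a Hadamard
triple, i.e. the matrix `(1/√N)[e^{2πidℓ/pₙ}]` is unitary; equivalently its columns
are pairwise orthogonal. -/
theorem exists_hadamard_triple (p : ℕ → ℕ) (D : ℕ → Finset ℕ)
    (hp : ∀ n, 1 ≤ n → 1 < p n) (hT : SatisfiesT p D) :
    ∀ n, 1 ≤ n → ∃ L : Finset ℤ, L.card = (D n).card ∧
      ∀ l ∈ L, ∀ l' ∈ L, l ≠ l' →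
        ∑ d ∈ D n, Complex.exp (2 * Real.pi * Complex.I * (d : ℝ) * ((l : ℝ) - (l' : ℝ))
          / (p n : ℝ)) = 0 :=
  fun n hn => exists_hadamard_triple_general (Nat.ne_zero_of_lt (hp n hn))
    (hT.isResidueSystemDilate hn)

end
end

section
/- Let f(x,y) = cos x · cos y · cos(x−y), and let (x_n)_{n≥1} and (y_n)_{n≥1} be real sequences such that: (i) x_n y_n > 0, |x_n| < 2π/3 and |y_n| < 2π/3 for all n; (ii) limsup_{n→∞} |x_n| < 2π/3 and limsup_{n→∞} |y_n| < 2π/3. Then inf_{n≥1} (1 + 8·f(x_n, y_n)) > 0. -/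
open MeasureTheory Filter Finset Real
open scoped ENNReal NNReal

noncomputable section

/-!
Suppose `C < 2π/3` bounds every `|x i|` and `|y i|`. Since `x i` and `y i` have the same sign, also
`|x i - y i| ≤ C`, so the three cosines of `a = x i`, `b = y i` and `a - b` are at least
`cos C > -1/2`. If all three are nonnegative, then `1 + 8 f(a, b) ≥ 1`. If one of them is some
`t ≤ 0`, write the product of the other two as half a sum of cosines, namely `(t + cos θ) / 2`;
then `1 + 8 f(a, b) = 1 + 4 t (t + cos θ) ≥ (1 + 2 t) ^ 2`. Hence the infimum is at least
`min 1 ((1 + 2 cos C) ^ 2)`.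
-/

theorem exists_lt_forall_le_of_limsup_cofinite_lt {ι α : Type*}
    [ConditionallyCompleteLinearOrder α] [DenselyOrdered α] {u : ι → α} {L : α}
    (hu : ∀ i, u i < L) (hlim : limsup u cofinite < L) : ∃ c < L, ∀ i, u i ≤ c := by
  obtain ⟨c, hlim_c, hcL⟩ := exists_between hlim
  have hbdd : IsBoundedUnder (· ≤ ·) cofinite u := isBoundedUnder_of ⟨L, fun i => (hu i).le⟩
  have hfin : {i | ¬u i < c}.Finite :=
    eventually_cofinite.1 (eventually_lt_of_limsup_lt hlim_c hbdd)
  rcases {i | ¬u i < c}.eq_empty_or_nonempty with hempty | hne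
  · exact ⟨c, hcL, fun i => (not_not.1 (Set.eq_empty_iff_forall_notMem.1 hempty i)).le⟩
  · obtain ⟨j, hcj, hmax⟩ := Set.exists_max_image _ u hfin hne
    refine ⟨u j, hu j, fun i => ?_⟩
    by_cases hi : u i < c
    · exact hi.le.trans (not_lt.1 hcj)
    · exact hmax i hi

theorem abs_sub_le_of_mul_nonneg {R : Type*} [Ring R] [LinearOrder R] [IsStrictOrderedRing R]
    {a b c : R} (hab : 0 ≤ a * b) (ha : |a| ≤ c) (hb : |b| ≤ c) : |a - b| ≤ c := by
  rw [abs_le] at ha hb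
  rcases mul_nonneg_iff.1 hab with ⟨ha₀, hb₀⟩ | ⟨ha₀, hb₀⟩
  · exact abs_sub_le_of_nonneg_of_le ha₀ ha.2 hb₀ hb.2
  · rw [abs_sub_comm, ← neg_sub_neg]
    exact abs_sub_le_of_nonneg_of_le (neg_nonneg.2 ha₀) (neg_le.1 ha.1)
      (neg_nonneg.2 hb₀) (neg_le.1 hb.1)

theorem cos_le_cos_of_abs_le {a c : ℝ} (hac : |a| ≤ c) (hc : c ≤ π) : cos c ≤ cos a := by
  rw [← cos_abs a]
  exact cos_le_cos_of_nonneg_of_le_pi (abs_nonneg a) hc hac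

theorem neg_half_lt_cos {a : ℝ} (ha₀ : 0 ≤ a) (ha : a < 2 * π / 3) : -(1 / 2) < cos a := by
  have hcos : cos (2 * π / 3) = -(1 / 2) := by
    rw [show 2 * π / 3 = π - π / 3 by ring, cos_pi_sub, cos_pi_div_three]
  rw [← hcos]
  exact cos_lt_cos_of_nonneg_of_le_pi ha₀ (by linarith [pi_pos]) ha

theorem sq_one_add_two_mul_cos_sub_le {a b : ℝ} (hab : cos (a - b) ≤ 0) :
    (1 + 2 * cos (a - b)) ^ 2 ≤ 1 + 8 * (cos a * cos b * cos (a - b)) := by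
  have hsum : 2 * cos a * cos b ≤ cos (a - b) + 1 := by
    rw [two_mul_cos_mul_cos]
    gcongr
    exact cos_le_one (a + b)
  calc (1 + 2 * cos (a - b)) ^ 2
      = 1 + 4 * ((cos (a - b) + 1) * cos (a - b)) := by ring
    _ ≤ 1 + 4 * (2 * cos a * cos b * cos (a - b)) := by
        gcongr 1 + 4 * ?_
        exact mul_le_mul_of_nonpos_right hsum hab
    _ = 1 + 8 * (cos a * cos b * cos (a - b)) := by ring

theorem min_one_sq_le_one_add_eight_mul_cos {a b m : ℝ} (hm : -(1 / 2) ≤ m) (ha : m ≤ cos a)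
    (hb : m ≤ cos b) (hab : m ≤ cos (a - b)) :
    min 1 ((1 + 2 * m) ^ 2) ≤ 1 + 8 * (cos a * cos b * cos (a - b)) := by
  have hsq {t : ℝ} (ht : m ≤ t) : min 1 ((1 + 2 * m) ^ 2) ≤ (1 + 2 * t) ^ 2 :=
    (min_le_right _ _).trans (pow_le_pow_left₀ (by linarith) (by linarith) 2)
  -- `(a, b) ↦ (b, b - a)` and `(a, b) ↦ (a, a - b)` preserve the product of the three cosines and
  -- turn the difference into `a` and `b` respectively.
  rcases le_total (cos (a - b)) 0 with hab₀ | hab₀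
  · exact (hsq hab).trans (sq_one_add_two_mul_cos_sub_le hab₀)
  rcases le_total (cos a) 0 with ha₀ | ha₀
  · have hle := sq_one_add_two_mul_cos_sub_le (a := b) (b := b - a) (by rwa [sub_sub_cancel])
    rw [sub_sub_cancel, ← neg_sub a b, cos_neg] at hle
    linarith [hsq ha]
  rcases le_total (cos b) 0 with hb₀ | hb₀
  · have hle := sq_one_add_two_mul_cos_sub_le (a := a) (b := a - b) (by rwa [sub_sub_cancel])
    rw [sub_sub_cancel] at hle
    linarith [hsq hb]
  · have hprod : 0 ≤ cos a * cos b * cos (a - b) := by positivity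
    exact (min_le_left _ _).trans (by linarith)

theorem inf_one_add_eight_f_pos_general {ι : Type*} [Nonempty ι] (x y : ι → ℝ)
    (hsign : ∀ i, 0 ≤ x i * y i)
    (hx : ∀ i, |x i| < 2 * π / 3) (hy : ∀ i, |y i| < 2 * π / 3)
    (hxl : limsup (fun i => |x i|) cofinite < 2 * π / 3)
    (hyl : limsup (fun i => |y i|) cofinite < 2 * π / 3) :
    0 < ⨅ i, (1 + 8 * (cos (x i) * cos (y i) * cos (x i - y i))) := by
  obtain ⟨c, hc, hxc⟩ := exists_lt_forall_le_of_limsup_cofinite_lt hx hxl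
  obtain ⟨d, hd, hyd⟩ := exists_lt_forall_le_of_limsup_cofinite_lt hy hyl
  obtain ⟨C, hC, hxC, hyC⟩ : ∃ C < 2 * π / 3, (∀ i, |x i| ≤ C) ∧ ∀ i, |y i| ≤ C :=
    ⟨max c d, max_lt hc hd, fun i => le_max_of_le_left (hxc i),
      fun i => le_max_of_le_right (hyd i)⟩
  have hC₀ : 0 ≤ C := (abs_nonneg _).trans (hxC (Classical.arbitrary ι))
  have hCπ : C ≤ π := by linarith [pi_pos]
  have hcos : -(1 / 2) < cos C := neg_half_lt_cos hC₀ hC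
  have hpos : 0 < min 1 ((1 + 2 * cos C) ^ 2) := lt_min one_pos (pow_pos (by linarith) 2)
  refine hpos.trans_le (le_ciInf fun i => min_one_sq_le_one_add_eight_mul_cos hcos.le ?_ ?_ ?_)
  · exact cos_le_cos_of_abs_le (hxC i) hCπ
  · exact cos_le_cos_of_abs_le (hyC i) hCπ
  · exact cos_le_cos_of_abs_le (abs_sub_le_of_mul_nonneg (hsign i) (hxC i) (hyC i)) hCπ

/-- Lemma 2.1. If `x_n y_n > 0`, `|x_n|, |y_n| < 2π/3` and the
limsups of `|x_n|`, `|y_n|` are `< 2π/3`, then `inf_n (1 + 8 cos x_n cos y_n cos(x_n - y_n)) > 0`. -/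
theorem inf_one_add_eight_f_pos (x y : ℕ → ℝ)
    (hpos : ∀ n, 0 < x n * y n)
    (hx : ∀ n, |x n| < 2 * Real.pi / 3) (hy : ∀ n, |y n| < 2 * Real.pi / 3)
    (hxl : Filter.limsup (fun n => |x n|) Filter.atTop < 2 * Real.pi / 3)
    (hyl : Filter.limsup (fun n => |y n|) Filter.atTop < 2 * Real.pi / 3) :
    0 < ⨅ n : ℕ, (1 + 8 * (Real.cos (x n) * Real.cos (y n) * Real.cos (x n - y n))) := by
  rw [← Nat.cofinite_eq_atTop] at hxl hyl
  exact inf_one_add_eight_f_pos_general x y (fun n => (hpos n).le) hx hy hxl hyl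

end
end
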